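/- The idomatic number of the directed cycle C_n (n ≥ 3) is 0 if n is odd and 2 if n is even. That is, when n is odd there is no independent dominating set of C_n, and when n is even the maximum number of pairwise disjoint independent dominating sets of C_n equals 2. -/

import Mathlib

/-- `S` is a dominating set for the arc relation `A`: every vertex not in `S`
has an in-neighbor in `S`. -/
def DomSet {V : Type*} (A : V → V → Prop) (S : Set V) : Prop :=
  ∀ v ∉ S, ∃ u ∈ S, A u v

/-- `S` is independent for the arc relation `A`: no arc joins two vertices of `S`. -/
def IndepSet {V : Type*} (A : V → V → Prop) (S : Set V) : Prop :=
  ∀ u ∈ S, ∀ v ∈ S, ¬ A u v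

/-- `S` is an independent dominating set for the arc relation `A`. -/
def IndepDomSet {V : Type*} (A : V → V → Prop) (S : Set V) : Prop :=
  IndepSet A S ∧ DomSet A S

/-!
A set `S` of vertices of the directed cycle is independent and dominating exactly when it alternates:
`i + 1 ∈ S ↔ i ∉ S` for every `i`, because `i` is the only in-neighbor of `i + 1`
(`indepDomSet_cycle_iff`). Going once around the cycle returns to the start after `n` alternations,
so no such set exists for odd `n`. For even `n` the even and the odd vertices are two disjoint such
sets. There are never three, since an alternating set contains exactly one of the vertices `0` and
`1`, so that two of the three would share a vertex.
-/

theorem indepDomSet_cycle_iff {n : ℕ} [NeZero n] {S : Set (Fin n)} :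
    IndepDomSet (fun i j : Fin n => i + 1 = j) S ↔ ∀ i, i + 1 ∈ S ↔ i ∉ S := by
  constructor
  · rintro ⟨hi, hd⟩ i
    refine ⟨fun h h' => hi i h' _ h rfl, fun h => ?_⟩
    by_contra h'
    obtain ⟨u, hu, e⟩ := hd _ h'
    exact h (add_right_cancel e ▸ hu)
  · intro h
    refine ⟨fun u hu v hv e => (h u).1 (by rwa [e]) hu, fun v hv => ⟨v - 1, ?_, sub_add_cancel v 1⟩⟩
    by_contra h'
    have := (h (v - 1)).2 h'
    rw [sub_add_cancel] at this
    exact hv this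

theorem nsmul_one_mem_iff {n : ℕ} [NeZero n] {S : Set (Fin n)} (h : ∀ i, i + 1 ∈ S ↔ i ∉ S)
    (k : ℕ) : k • (1 : Fin n) ∈ S ↔ (Even k ↔ 0 ∈ S) := by
  induction k with
  | zero => simp
  | succ k ih =>
    rw [succ_nsmul, h, ih, Nat.even_add_one]
    tauto

/-- For even `n` the parity of the representative in `{0, …, n - 1}` alternates around the cycle,
including at the arc from `n - 1` to `0`. -/
theorem even_val_add_one {n : ℕ} [NeZero n] (hn : Even n) (i : Fin n) :
    Even (i + 1).val ↔ ¬ Even i.val := by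
  obtain ⟨m, hm⟩ := hn
  have h0 := NeZero.ne n
  have hi := i.isLt
  rw [Fin.val_add, Fin.val_one', Nat.mod_eq_of_lt (show 1 < n by omega)]
  rcases Nat.lt_or_ge (i.val + 1) n with h | h
  · rw [Nat.mod_eq_of_lt h, Nat.even_add_one]
  · rw [show i.val + 1 = n by omega, Nat.mod_self, Nat.even_iff, Nat.even_iff]
    omega

/-- The idomatic number of the directed cycle `C_n` (`n ≥ 3`, vertices
`0, …, n-1`, arcs `i → i+1 (mod n)`) is `0` if `n` is odd and `2` if `n` is
even: when `n` is odd there is no independent dominating set, and when `n` is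
even there exist two pairwise disjoint (distinct) independent dominating sets
but no three. -/
theorem stmt_19 (n : ℕ) [NeZero n] (hn : 3 ≤ n) :
    (Odd n → ¬ ∃ S : Set (Fin n), IndepDomSet (fun i j : Fin n => i + 1 = j) S) ∧
    (Even n →
      (∃ S₁ S₂ : Set (Fin n),
        IndepDomSet (fun i j : Fin n => i + 1 = j) S₁ ∧
        IndepDomSet (fun i j : Fin n => i + 1 = j) S₂ ∧
        S₁ ≠ S₂ ∧ Disjoint S₁ S₂) ∧
      ¬ ∃ S₁ S₂ S₃ : Set (Fin n),
        IndepDomSet (fun i j : Fin n => i + 1 = j) S₁ ∧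
        IndepDomSet (fun i j : Fin n => i + 1 = j) S₂ ∧
        IndepDomSet (fun i j : Fin n => i + 1 = j) S₃ ∧
        S₁ ≠ S₂ ∧ S₁ ≠ S₃ ∧ S₂ ≠ S₃ ∧
        Disjoint S₁ S₂ ∧ Disjoint S₁ S₃ ∧ Disjoint S₂ S₃) := by
  simp only [indepDomSet_cycle_iff]
  refine ⟨?_, fun he => ⟨?_, ?_⟩⟩
  · rintro ho ⟨S, h⟩
    have key := nsmul_one_mem_iff h n
    have hz : n • (1 : Fin n) = 0 := by
      simpa using card_nsmul_eq_zero (G := Fin n) (x := 1)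
    rw [hz] at key
    have : ¬ Even n := Nat.not_even_iff_odd.2 ho
    tauto
  · refine ⟨{i | Even i.val}, {i | ¬ Even i.val}, fun i => even_val_add_one he i,
      fun i => not_congr (even_val_add_one he i), fun h => ?_, ?_⟩
    · have h0 : (0 : Fin n) ∈ {i : Fin n | Even i.val} := by simp
      have h1 := h0
      rw [h] at h1
      exact h1 h0
    · exact Set.disjoint_left.2 fun i h h' => h' h
  · rintro ⟨S₁, S₂, S₃, h₁, h₂, h₃, -, -, -, d₁₂, d₁₃, d₂₃⟩
    rw [Set.disjoint_left] at d₁₂ d₁₃ d₂₃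
    have a₁ := h₁ 0
    have a₂ := h₂ 0
    have a₃ := h₃ 0
    have b₁₂ := @d₁₂ 0
    have b₁₃ := @d₁₃ 0
    have b₂₃ := @d₂₃ 0
    have c₁₂ := @d₁₂ (0 + 1)
    have c₁₃ := @d₁₃ (0 + 1)
    have c₂₃ := @d₂₃ (0 + 1)
    tauto
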